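/- Let 1 < c < 2. Then for every nonzero integer h and all y ≥ 2, ∑_{y<m≤2y} e(h m^{1/c}) ≪ |h|^{1/2} y^{1/(2c)} + |h|^{−1} y^{1−1/c}. -/

import Mathlib

open scoped BigOperators Classical
open Real

noncomputable section

/-- `e(t) = e^{2πit}`. -/
def eC (t : ℝ) : ℂ := Complex.exp (2 * Real.pi * Complex.I * t)

/-- The Piatetski-Shapiro set `ℕ^c = {⌊n^c⌋ : n ∈ ℕ}`. -/
def PS (c : ℝ) : Set ℕ := {m | ∃ n : ℕ, 0 < n ∧ m = ⌊(n : ℝ) ^ c⌋₊}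

/-- The Fourier transform `f̂(α) = ∑_{n ∈ ℤ} f(n) e(αn)` of a finitely
supported function on `ℤ`. -/
def FT (f : ℤ → ℂ) (α : ℝ) : ℂ := ∑ᶠ n : ℤ, f n * eC (α * n)

/-- `w = (1/2) log log x`. -/
def wps (x : ℕ) : ℝ := Real.log (Real.log x) / 2

/-- `W = 4 d³ ∏_{p ≤ w} p`. -/
def Wps (d x : ℕ) : ℕ :=
  4 * d ^ 3 * ∏ p ∈ Finset.filter Nat.Prime (Finset.Iic ⌊wps x⌋₊), p

/-- `σ(b) = #{z ∈ [W] : z^d ≡ -b (mod W)}`. -/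
def sigmaPS (d W b : ℕ) : ℕ :=
  ((Finset.Icc 1 W).filter fun z => (z ^ d + b) % W = 0).card

/-- `N = ⌊x^d / W⌋ + 1`. -/
def Nps (d x : ℕ) : ℕ := ⌊(x : ℝ) ^ d / (Wps d x : ℝ)⌋₊ + 1

/-- `b ∈ [W]` and `-b ∈ (ℤ/Wℤ)^{×d}`. -/
def bSpec (d x b : ℕ) : Prop :=
  b ∈ Finset.Icc 1 (Wps d x) ∧
    ∃ z : (ZMod (Wps d x))ˣ, (z : ZMod (Wps d x)) ^ d = -(b : ZMod (Wps d x))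

/-- `S(d) = 2⌊d²/2⌋`. -/
def Sd (d : ℕ) : ℕ := 2 * (d ^ 2 / 2)

def hD (d : ℕ) : ℝ := 1 / ((d : ℝ) * ((d : ℝ) + 1) ^ 2 - 1)
def kD (d : ℕ) : ℝ := 2 / (27 * (d : ℝ) ^ 2 - 14)
def lD (d : ℕ) : ℝ := 2 / (27 * (d : ℝ) ^ 2 - 5)

/-- `θ(d, c)`. -/
def θdc (d : ℕ) (c : ℝ) : ℝ :=
  if d = 2 then (4 * c + 7) / 13
  else if d = 3 then (15 * c + 14) / 30
  else if d ≤ 11 then (1 + c) / 2 * (1 - hD d)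
  else if 2 ∣ d then (1 + c) / 2 * (1 - kD d)
  else (1 + c) / 2 * (1 - lD d)

/-- `c₂(d)`. -/
def c2ps (d : ℕ) : ℝ :=
  if d = 2 then 1 / 54
  else if d = 3 then 1 / 495
  else if d ≤ 11 then 2 * hD d / (4 * (Sd d : ℝ) + 1 - hD d)
  else if 2 ∣ d then 2 * kD d / (4 * (Sd d : ℝ) + 1 - kD d)
  else 2 * lD d / (4 * (Sd d : ℝ) + 1 - lD d)

/-- The majorant `ν = ν_b` from the density transfer lemma, characterized by
its defining property. -/
def nuSpec (d x : ℕ) (c : ℝ) (b : ℕ) (ν : ℤ → ℝ) : Prop :=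
  (∀ n : ℤ, ∀ p : ℕ, p.Prime → p ∈ PS c → p ≤ x →
      (Wps d x : ℤ) * n - (b : ℤ) = (p : ℤ) ^ d →
      ν n = c * (Nat.totient (Wps d x) : ℝ) /
          ((sigmaPS d (Wps d x) b : ℝ) * (Wps d x : ℝ)) *
          (p : ℝ) ^ ((d : ℝ) - 1 / c) * Real.log p) ∧
  (∀ n : ℤ, (¬ ∃ p : ℕ, p.Prime ∧ p ∈ PS c ∧ p ≤ x ∧
      (Wps d x : ℤ) * n - (b : ℤ) = (p : ℤ) ^ d) → ν n = 0)

/-- The majorant `τ`, characterized by its defining property. -/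
def tauSpec (d x : ℕ) (c : ℝ) (b : ℕ) (τ : ℤ → ℝ) : Prop :=
  (∀ n : ℤ, ∀ m : ℕ, m ∈ PS c → m ≤ x →
      (Wps d x : ℤ) * n - (b : ℤ) = (m : ℤ) ^ d →
      τ n = c / (sigmaPS d (Wps d x) b : ℝ) * (m : ℝ) ^ ((d : ℝ) - 1 / c)) ∧
  (∀ n : ℤ, (¬ ∃ m : ℕ, m ∈ PS c ∧ m ≤ x ∧
      (Wps d x : ℤ) * n - (b : ℤ) = (m : ℤ) ^ d) → τ n = 0)

/-- The function `μ`, characterized by its defining property. -/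
def muSpec (d x : ℕ) (b : ℕ) (μ : ℤ → ℝ) : Prop :=
  (∀ n : ℤ, ∀ m : ℕ, 1 ≤ m → m ≤ x →
      (Wps d x : ℤ) * n - (b : ℤ) = (m : ℤ) ^ d →
      μ n = (m : ℝ) ^ (d - 1) / (sigmaPS d (Wps d x) b : ℝ)) ∧
  (∀ n : ℤ, (¬ ∃ m : ℕ, 1 ≤ m ∧ m ≤ x ∧
      (Wps d x : ℤ) * n - (b : ℤ) = (m : ℤ) ^ d) → μ n = 0)

lemma eC_add (a b : ℝ) : eC (a + b) = eC a * eC b := by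
  unfold eC; rw [← Complex.exp_add]; congr 1; push_cast; ring

lemma eC_norm (a : ℝ) : ‖eC a‖ = 1 := by
  unfold eC
  rw [show (2 * Real.pi * Complex.I * a : ℂ) = ((2 * Real.pi * a : ℝ) : ℂ) * Complex.I by
    push_cast; ring]
  exact Complex.norm_exp_ofReal_mul_I _

lemma eC_int (k : ℤ) : eC (k : ℝ) = 1 := by
  unfold eC
  rw [Complex.exp_eq_one_iff]
  exact ⟨k, by push_cast; ring⟩

lemma eC_neg (a : ℝ) : eC (-a) = (starRingEnd ℂ) (eC a) := by
  unfold eC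
  rw [← Complex.exp_conj]; congr 1
  rw [show (2 * Real.pi * Complex.I * a : ℂ) = ((2 * Real.pi * a : ℝ) : ℂ) * Complex.I by
    push_cast; ring, map_mul, Complex.conj_ofReal, Complex.conj_I]
  push_cast; ring

/-- g(t) = 1/(1-e(t)) -/
def gK (t : ℝ) : ℂ :=
  1 / 2 + ((Real.cos (π * t) / Real.sin (π * t) / 2 : ℝ) : ℂ) * Complex.I

lemma gK_re (t : ℝ) : (gK t).re = 1 / 2 := by
  unfold gK
  rw [Complex.add_re, Complex.re_ofReal_mul, Complex.I_re]; norm_num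

lemma gK_im (t : ℝ) : (gK t).im = Real.cos (π * t) / Real.sin (π * t) / 2 := by
  unfold gK
  rw [Complex.add_im, Complex.im_ofReal_mul, Complex.I_im]; norm_num

lemma gK_mul (t : ℝ) (ht : Real.sin (π * t) ≠ 0) : (1 - eC t) * gK t = 1 := by
  have h1 : eC t = ((Real.cos (2 * (π * t)) : ℝ) : ℂ) + ((Real.sin (2 * (π * t)) : ℝ) : ℂ) * Complex.I := by
    unfold eC
    rw [show (2 * Real.pi * Complex.I * t : ℂ) = ((2 * (Real.pi * t) : ℝ) : ℂ) * Complex.I by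
      push_cast; ring, Complex.exp_mul_I, Complex.ofReal_cos, Complex.ofReal_sin]
  have hs := Real.sin_sq_add_cos_sq (π * t)
  rw [h1, Real.cos_two_mul, Real.sin_two_mul]
  apply Complex.ext
  · rw [Complex.mul_re, gK_re, gK_im]
    simp only [Complex.sub_re, Complex.sub_im, Complex.add_re, Complex.add_im, Complex.one_re,
      Complex.one_im, Complex.re_ofReal_mul, Complex.im_ofReal_mul, Complex.I_re, Complex.I_im,
      Complex.ofReal_re, Complex.ofReal_im]
    field_simp
    linear_combination 0 * hs
  · rw [Complex.mul_im, gK_re, gK_im]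
    simp only [Complex.sub_re, Complex.sub_im, Complex.add_re, Complex.add_im, Complex.one_re,
      Complex.one_im, Complex.re_ofReal_mul, Complex.im_ofReal_mul, Complex.I_re, Complex.I_im,
      Complex.ofReal_re, Complex.ofReal_im]
    field_simp
    linear_combination -2 * Real.cos (π * t) * hs

lemma sin_lb (t δ : ℝ) (hδ : 0 < δ) (h1 : δ ≤ t) (h2 : t ≤ 1 - δ) :
    2 * δ ≤ Real.sin (π * t) := by
  have hp := Real.pi_pos
  rcases le_total t (1/2) with h | h
  · have := Real.mul_le_sin (x := π * t) (mul_nonneg hp.le (by linarith)) (by nlinarith)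
    have e : 2 / π * (π * t) = 2 * t := by field_simp
    linarith
  · have := Real.mul_le_sin (x := π * (1 - t)) (by apply mul_nonneg <;> linarith) (by nlinarith)
    have e : 2 / π * (π * (1 - t)) = 2 * (1 - t) := by field_simp
    have e2 : Real.sin (π * (1 - t)) = Real.sin (π * t) := by
      rw [show π * (1 - t) = π - π * t by ring, Real.sin_pi_sub]
    linarith

lemma gK_norm (t δ : ℝ) (hδ : 0 < δ) (h1 : δ ≤ t) (h2 : t ≤ 1 - δ) :
    ‖gK t‖ ≤ 1 / (4 * δ) := by
  have hs := sin_lb t δ hδ h1 h2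
  have hs0 : 0 < Real.sin (π * t) := by linarith
  have e : ‖gK t‖ = 1 / (2 * Real.sin (π * t)) := by
    have hsc := Real.sin_sq_add_cos_sq (π * t)
    rw [← sq_eq_sq₀ (norm_nonneg _) (by positivity), ← Complex.normSq_eq_norm_sq,
      Complex.normSq_apply, gK_re, gK_im]
    field_simp
    linear_combination hsc
  rw [e]
  apply one_div_le_one_div_of_le <;> linarith

lemma gK_sub (a b δ : ℝ) (hδ : 0 < δ) (h1 : δ ≤ a) (h2 : b ≤ 1 - δ) (hab : a ≤ b) :
    ‖gK a - gK b‖ = (gK a).im - (gK b).im := by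
  have hs1 := sin_lb a δ hδ h1 (by linarith)
  have hs2 := sin_lb b δ hδ (by linarith) h2
  have hp := Real.pi_pos
  have hn : 0 ≤ (gK a).im - (gK b).im := by
    have hsin : 0 ≤ Real.sin (π * b - π * a) :=
      Real.sin_nonneg_of_nonneg_of_le_pi (by nlinarith) (by nlinarith)
    rw [Real.sin_sub] at hsin
    rw [gK_im, gK_im]
    have : Real.cos (π * b) / Real.sin (π * b) ≤ Real.cos (π * a) / Real.sin (π * a) := by
      rw [div_le_div_iff₀ (by linarith) (by linarith)]; linarith
    linarith
  have : gK a - gK b = (((gK a).im - (gK b).im : ℝ) : ℂ) * Complex.I := by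
    apply Complex.ext
    · rw [Complex.sub_re, gK_re, gK_re, Complex.re_ofReal_mul, Complex.I_re]; norm_num
    · rw [Complex.sub_im, Complex.im_ofReal_mul, Complex.I_im, mul_one]
  rw [this, norm_mul, Complex.norm_I, mul_one, Complex.norm_real, Real.norm_eq_abs,
    abs_of_nonneg hn]

lemma abel_id (u g : ℕ → ℂ) (N : ℕ) :
    ∑ n ∈ Finset.range (N + 1), (u n - u (n + 1)) * g n =
      u 0 * g 0 - u (N + 1) * g N + ∑ n ∈ Finset.range N, u (n + 1) * (g (n + 1) - g n) := by
  induction N with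
  | zero => simp; ring
  | succ k ih => rw [Finset.sum_range_succ, ih, Finset.sum_range_succ _ k]; ring

lemma KL0 (f : ℕ → ℝ) (N : ℕ) (δ : ℝ) (hδ : 0 < δ)
    (h1 : ∀ n < N, δ ≤ f (n + 1) - f n) (h2 : ∀ n < N, f (n + 1) - f n ≤ 1 - δ)
    (h3 : ∀ n, n + 1 < N → f (n + 2) - f (n + 1) ≤ f (n + 1) - f n) :
    ‖∑ n ∈ Finset.range N, eC (f n)‖ ≤ 1 / δ := by
  rcases N with _ | N
  · simp; positivity
  set g : ℕ → ℂ := fun n => gK (f (n + 1) - f n) with hg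
  have hgn : ∀ n < N + 1, ‖g n‖ ≤ 1 / (4 * δ) := fun n hn => gK_norm _ δ hδ (h1 n hn) (h2 n hn)
  have e : ∀ n ∈ Finset.range (N + 1), eC (f n) = (eC (f n) - eC (f (n + 1))) * g n := by
    intro n hn
    have hn' := Finset.mem_range.1 hn
    have hs := sin_lb _ δ hδ (h1 n hn') (h2 n hn')
    have := gK_mul (f (n + 1) - f n) (by linarith)
    have e2 : eC (f (n + 1)) = eC (f n) * eC (f (n + 1) - f n) := by
      rw [← eC_add]; congr 1; ring
    rw [e2]
    simp only [hg]
    linear_combination -(eC (f n)) * this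
  rw [Finset.sum_congr rfl e, abel_id (fun n => eC (f n)) g N]
  have hsum : ‖∑ n ∈ Finset.range N, eC (f (n + 1)) * (g (n + 1) - g n)‖ ≤ (g N).im - (g 0).im := by
    refine (norm_sum_le _ _).trans ?_
    rw [← Finset.sum_range_sub (fun n => (g n).im) N]
    apply Finset.sum_le_sum
    intro n hn
    have hn' := Finset.mem_range.1 hn
    rw [norm_mul, eC_norm, one_mul]
    exact (gK_sub _ _ δ hδ (h1 (n + 1) (by omega)) (h2 n (by omega)) (h3 n (by omega))).le
  have a1 := hgn 0 (by omega)
  have a2 := hgn N (by omega)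
  have b1 := (abs_le.1 (Complex.abs_im_le_norm (g 0))).1
  have b2 := (abs_le.1 (Complex.abs_im_le_norm (g N))).2
  have c1 : ‖eC (f 0) * g 0‖ = ‖g 0‖ := by rw [norm_mul, eC_norm, one_mul]
  have c2 : ‖eC (f (N + 1)) * g N‖ = ‖g N‖ := by rw [norm_mul, eC_norm, one_mul]
  have d1 := norm_add_le (eC (f 0) * g 0 - eC (f (N + 1)) * g N)
    (∑ n ∈ Finset.range N, eC (f (n + 1)) * (g (n + 1) - g n))
  have d2 := norm_sub_le (eC (f 0) * g 0) (eC (f (N + 1)) * g N)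
  have : 1 / δ = 4 * (1 / (4 * δ)) := by field_simp
  linarith

lemma KL (f : ℕ → ℝ) (p q : ℕ) (k : ℤ) (δ : ℝ) (hδ : 0 < δ)
    (h1 : ∀ n, p ≤ n → n < q → k + δ ≤ f (n + 1) - f n)
    (h2 : ∀ n, p ≤ n → n < q → f (n + 1) - f n ≤ k + 1 - δ)
    (h3 : ∀ n, p ≤ n → n + 1 < q → f (n + 2) - f (n + 1) ≤ f (n + 1) - f n) :
    ‖∑ n ∈ Finset.Ico p q, eC (f n)‖ ≤ 1 / δ := by
  rw [Finset.sum_Ico_eq_sum_range]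
  have := KL0 (fun n => f (p + n) - k * n) (q - p) δ hδ ?_ ?_ ?_
  · convert this using 3 with n _
    have : f (p + n) = (f (p + n) - k * n) + ((k * n : ℤ) : ℝ) := by push_cast; ring
    conv_lhs => rw [this]
    rw [eC_add, eC_int, mul_one]
  · intro n hn
    have := h1 (p + n) (by omega) (by omega)
    push_cast
    rw [← add_assoc]; linarith
  · intro n hn
    have := h2 (p + n) (by omega) (by omega)
    push_cast
    rw [← add_assoc]; linarith
  · intro n hn
    have := h3 (p + n) (by omega) (by omega)
    push_cast
    simp only [← add_assoc]; linarith

lemma card_bd (s : Finset ℕ) (θ : ℕ → ℝ) (l δ a : ℝ) (hl : 0 < l) (hδ : 0 < δ)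
    (hs : ∀ m ∈ s, ∀ n ∈ s, m ≤ n → θ n + l * ((n : ℝ) - m) ≤ θ m)
    (ha : ∀ n ∈ s, a ≤ θ n ∧ θ n ≤ a + δ) : (s.card : ℝ) ≤ δ / l + 1 := by
  rcases s.eq_empty_or_nonempty with rfl | hne
  · simp; positivity
  have hsub : s ⊆ Finset.Icc (s.min' hne) (s.max' hne) := fun x hx =>
    Finset.mem_Icc.2 ⟨s.min'_le x hx, s.le_max' x hx⟩
  have hc := Finset.card_le_card hsub
  have hmm : s.min' hne ≤ s.max' hne := s.min'_le _ (s.max'_mem hne)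
  rw [Nat.card_Icc] at hc
  have hc' : (s.card : ℝ) ≤ (s.max' hne : ℝ) - s.min' hne + 1 := by
    have : s.card + s.min' hne ≤ s.max' hne + 1 := by omega
    have : (s.card : ℝ) + s.min' hne ≤ s.max' hne + 1 := by exact_mod_cast this
    linarith
  have h := hs _ (s.min'_mem hne) _ (s.max'_mem hne) hmm
  have h1 := ha _ (s.min'_mem hne)
  have h2 := ha _ (s.max'_mem hne)
  have : (s.max' hne : ℝ) - s.min' hne ≤ δ / l := by
    rw [le_div_iff₀ hl]; linarith
  linarith

lemma ico_of (s : Finset ℕ) (hs : ∀ m ∈ s, ∀ n ∈ s, ∀ j, m ≤ j → j ≤ n → j ∈ s) :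
    ∃ p q, s = Finset.Ico p q := by
  rcases s.eq_empty_or_nonempty with rfl | hne
  · exact ⟨0, 0, by simp⟩
  refine ⟨s.min' hne, s.max' hne + 1, ?_⟩
  ext x
  rw [Finset.mem_Ico]
  constructor
  · intro hx
    exact ⟨s.min'_le x hx, Nat.lt_succ_of_le (s.le_max' x hx)⟩
  · rintro ⟨h1, h2⟩
    exact hs _ (s.min'_mem hne) _ (s.max'_mem hne) x h1 (Nat.le_of_lt_succ h2)

lemma norm_sum_card (s : Finset ℕ) (f : ℕ → ℝ) : ‖∑ n ∈ s, eC (f n)‖ ≤ s.card := by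
  refine (norm_sum_le _ _).trans ?_
  simp [eC_norm]

lemma vdC (f : ℕ → ℝ) (N : ℕ) (l δ V : ℝ) (hl : 0 < l) (hδ : 0 < δ) (hV : 0 ≤ V)
    (h1 : ∀ n < N, 0 ≤ f (n + 1) - f n) (h2 : ∀ n < N, f (n + 1) - f n ≤ V)
    (h3 : ∀ n, n + 1 < N → f (n + 2) - f (n + 1) + l ≤ f (n + 1) - f n) :
    ‖∑ n ∈ Finset.range N, eC (f n)‖ ≤ (V + 1) * (1 / δ + 2 * (δ / l + 1)) := by
  set θ : ℕ → ℝ := fun n => f (n + 1) - f n with hθ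
  have mono : ∀ m n, m ≤ n → n < N → θ n + l * ((n : ℝ) - m) ≤ θ m := by
    intro m n hmn
    induction n, hmn using Nat.le_induction with
    | base => intro _; simp
    | succ n hmn ih =>
      intro hn
      have a := ih (by omega)
      have b := h3 n hn
      simp only [hθ] at *
      push_cast
      rw [show n + 1 + 1 = n + 2 by ring]
      linarith
  have anti : ∀ m n, m ≤ n → n < N → θ n ≤ θ m := by
    intro m n hmn hn
    have := mono m n hmn hn
    have h0 : (m : ℝ) ≤ n := by exact_mod_cast hmn
    have : 0 ≤ l * ((n : ℝ) - m) := mul_nonneg hl.le (by linarith)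
    linarith
  have maps : ∀ n ∈ Finset.range N, ⌊θ n⌋₊ ∈ Finset.range (⌊V⌋₊ + 1) := by
    intro n hn
    rw [Finset.mem_range] at *
    exact Nat.lt_succ_of_le (Nat.floor_le_floor (h2 n hn))
  rw [← Finset.sum_fiberwise_of_maps_to maps]
  refine (norm_sum_le _ _).trans ?_
  have fib : ∀ k ∈ Finset.range (⌊V⌋₊ + 1),
      ‖∑ n ∈ Finset.range N with ⌊θ n⌋₊ = k, eC (f n)‖ ≤ 1 / δ + 2 * (δ / l + 1) := by
    intro k _
    set F := (Finset.range N).filter (fun n => ⌊θ n⌋₊ = k) with hF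
    have memF : ∀ n, n ∈ F ↔ n < N ∧ (k : ℝ) ≤ θ n ∧ θ n < k + 1 := by
      intro n
      rw [hF, Finset.mem_filter, Finset.mem_range]
      constructor
      · rintro ⟨a, b⟩
        exact ⟨a, (Nat.floor_eq_iff (h1 n a)).1 b⟩
      · rintro ⟨a, b⟩
        exact ⟨a, (Nat.floor_eq_iff (h1 n a)).2 b⟩
    rw [← Finset.sum_filter_add_sum_filter_not F (fun n => θ n < k + δ),
      ← Finset.sum_filter_add_sum_filter_not (F.filter (fun n => ¬ θ n < k + δ))
        (fun n => k + 1 - δ < θ n)]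
    have t1 : ‖∑ n ∈ F.filter (fun n => θ n < k + δ), eC (f n)‖ ≤ δ / l + 1 := by
      refine (norm_sum_card _ _).trans (card_bd _ θ l δ k hl hδ ?_ ?_)
      · intro m hm n hn hmn
        exact mono m n hmn ((memF n).1 (Finset.mem_filter.1 hn).1).1
      · intro n hn
        rw [Finset.mem_filter, memF] at hn
        exact ⟨hn.1.2.1, hn.2.le⟩
    have t2 : ‖∑ n ∈ (F.filter (fun n => ¬ θ n < k + δ)).filter (fun n => k + 1 - δ < θ n),
        eC (f n)‖ ≤ δ / l + 1 := by
      refine (norm_sum_card _ _).trans (card_bd _ θ l δ (k + 1 - δ) hl hδ ?_ ?_)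
      · intro m hm n hn hmn
        rw [Finset.mem_filter, Finset.mem_filter, memF] at hn
        exact mono m n hmn hn.1.1.1
      · intro n hn
        rw [Finset.mem_filter, Finset.mem_filter, memF] at hn
        exact ⟨hn.2.le, by linarith [hn.1.1.2.2]⟩
    have t3 : ‖∑ n ∈ (F.filter (fun n => ¬ θ n < k + δ)).filter (fun n => ¬ k + 1 - δ < θ n),
        eC (f n)‖ ≤ 1 / δ := by
      set G := (F.filter (fun n => ¬ θ n < k + δ)).filter (fun n => ¬ k + 1 - δ < θ n) with hG
      have memG : ∀ n, n ∈ G ↔ n < N ∧ k + δ ≤ θ n ∧ θ n ≤ k + 1 - δ := by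
        intro n
        rw [hG, Finset.mem_filter, Finset.mem_filter, memF]
        constructor
        · rintro ⟨⟨⟨a, b, c⟩, d⟩, e⟩
          exact ⟨a, not_lt.1 d, not_lt.1 e⟩
        · rintro ⟨a, b, c⟩
          exact ⟨⟨⟨a, by linarith, by linarith⟩, not_lt.2 b⟩, not_lt.2 c⟩
      obtain ⟨p, q, hpq⟩ := ico_of G (by
        intro m hm n hn j hmj hjn
        rw [memG] at *
        refine ⟨by omega, ?_, ?_⟩
        · linarith [anti j n hjn hn.1, hn.2.1]
        · linarith [anti m j hmj (by omega), hm.2.2])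
      have memI : ∀ n, p ≤ n → n < q → n < N ∧ k + δ ≤ θ n ∧ θ n ≤ k + 1 - δ := by
        intro n a b
        rw [← memG, hpq, Finset.mem_Ico]; exact ⟨a, b⟩
      rw [hpq]
      apply KL f p q k δ hδ
      · intro n a b; exact_mod_cast (memI n a b).2.1
      · intro n a b; exact_mod_cast (memI n a b).2.2
      · intro n a b
        have := h3 n (memI (n + 1) (by omega) b).1
        linarith
    refine (norm_add_le _ _).trans ?_
    refine (add_le_add t1 ((norm_add_le _ _).trans (add_le_add t2 t3))).trans ?_
    linarith
  refine (Finset.sum_le_sum fib).trans ?_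
  rw [Finset.sum_const, Finset.card_range, nsmul_eq_mul]
  push_cast
  apply mul_le_mul_of_nonneg_right
  · linarith [Nat.floor_le hV]
  · positivity

lemma pow_diff (γ x : ℝ) (hγ : 0 < γ) (hγ1 : γ < 1) (hx : 0 < x) :
    γ * (x + 1) ^ (γ - 1) ≤ (x + 1) ^ γ - x ^ γ ∧ (x + 1) ^ γ - x ^ γ ≤ γ * x ^ (γ - 1) := by
  obtain ⟨ξ, hξ, he⟩ := exists_hasDerivAt_eq_slope (fun t : ℝ => t ^ γ)
    (fun t => γ * t ^ (γ - 1)) (a := x) (b := x + 1) (by linarith)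
    (fun t ht => (Real.continuousAt_rpow_const t γ (Or.inr hγ.le)).continuousWithinAt)
    (fun t ht => Real.hasDerivAt_rpow_const (Or.inl (by linarith [ht.1])))
  simp only [add_sub_cancel_left, div_one] at he
  rw [← he]
  constructor
  · apply mul_le_mul_of_nonneg_left _ hγ.le
    exact Real.rpow_le_rpow_of_nonpos (by linarith [hξ.1]) hξ.2.le (by linarith)
  · apply mul_le_mul_of_nonneg_left _ hγ.le
    exact Real.rpow_le_rpow_of_nonpos hx hξ.1.le (by linarith)

lemma pow_diff2 (γ x : ℝ) (hγ : 0 < γ) (hγ1 : γ < 1) (hx : 0 < x) :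
    (x + 2) ^ γ - (x + 1) ^ γ + γ * (1 - γ) * (x + 2) ^ (γ - 2) ≤ (x + 1) ^ γ - x ^ γ := by
  obtain ⟨ξ, hξ, he⟩ := exists_hasDerivAt_eq_slope (fun t : ℝ => (t + 1) ^ γ - t ^ γ)
    (fun t => γ * (t + 1) ^ (γ - 1) - γ * t ^ (γ - 1)) (a := x) (b := x + 1) (by linarith)
    (fun t ht => by
      have : 0 < t := by linarith [ht.1]
      apply ContinuousAt.continuousWithinAt
      apply ContinuousAt.sub
      · exact ContinuousAt.rpow_const (by fun_prop) (Or.inr hγ.le)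
      · exact Real.continuousAt_rpow_const t γ (Or.inr hγ.le))
    (fun t ht => by
      have : 0 < t := by linarith [ht.1]
      have a := ((hasDerivAt_id t).add_const 1).rpow_const (p := γ)
        (Or.inl (by simp; linarith))
      have b := Real.hasDerivAt_rpow_const (x := t) (p := γ) (Or.inl (by linarith))
      have d := a.sub b
      simp only [id, one_mul] at d
      exact d)
  have hξ0 : 0 < ξ := by linarith [hξ.1]
  obtain ⟨η, hη, he2⟩ := exists_hasDerivAt_eq_slope (fun t : ℝ => t ^ (γ - 1))
    (fun t => (γ - 1) * t ^ (γ - 1 - 1)) (a := ξ) (b := ξ + 1) (by linarith)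
    (fun t ht => (Real.continuousAt_rpow_const t _ (Or.inl (by linarith [ht.1]))).continuousWithinAt)
    (fun t ht => Real.hasDerivAt_rpow_const (Or.inl (by linarith [ht.1])))
  simp only [add_sub_cancel_left, div_one] at he he2
  have hm : (x + 2) ^ (γ - 2) ≤ η ^ (γ - 2) :=
    Real.rpow_le_rpow_of_nonpos (by linarith [hη.1]) (by linarith [hη.2, hξ.2]) (by linarith)
  rw [show γ - 1 - 1 = γ - 2 by ring] at he2
  rw [show x + 1 + 1 = x + 2 by ring] at he
  have : γ * (1 - γ) * (x + 2) ^ (γ - 2) ≤ γ * (1 - γ) * η ^ (γ - 2) :=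
    mul_le_mul_of_nonneg_left hm (mul_nonneg hγ.le (by linarith))
  have e3 : γ * (1 - γ) * η ^ (γ - 2) = - (γ * (ξ + 1) ^ (γ - 1) - γ * ξ ^ (γ - 1)) := by
    linear_combination -γ * he2
  linarith

/-- abstract final bound -/
lemma abs_bd (f : ℕ → ℝ) (N : ℕ) (A y κ κ2 : ℝ) (hA : 0 < A) (hy : 2 ≤ y) (hN : (N : ℝ) ≤ 2 * y)
    (hκ : 0 < κ) (hκ1 : κ ≤ 1) (hκ2 : 0 < κ2)
    (h1 : ∀ n < N, κ * A ≤ f (n + 1) - f n) (h2 : ∀ n < N, f (n + 1) - f n ≤ A)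
    (h3 : ∀ n, n + 1 < N → f (n + 2) - f (n + 1) + κ2 * (A / y) ≤ f (n + 1) - f n) :
    ‖∑ n ∈ Finset.range N, eC (f n)‖ ≤
      (1 / κ + 2 + 3 * (3 + 2 / κ2)) * (√(A * y) + 1 / A) := by
  have hy0 : 0 < y := by linarith
  have hl : 0 < κ2 * (A / y) := by positivity
  have q1 : 0 < 1 / κ := by positivity
  have q2 : 0 < 2 / κ2 := by positivity
  have q3 : 0 < 1 / A := by positivity
  have q4 : 0 < √(A * y) := Real.sqrt_pos.2 (by positivity)
  have key : ∀ a X, 0 ≤ a → a ≤ (1 / κ + 2 + 3 * (3 + 2 / κ2)) → 0 ≤ X → X ≤ (√(A * y) + 1 / A) →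
      a * X ≤ (1 / κ + 2 + 3 * (3 + 2 / κ2)) * (√(A * y) + 1 / A) := by
    intro a X h0 h1 h2 h3
    exact mul_le_mul h1 h3 h2 (by positivity)
  rcases le_or_gt A (1 / 2) with hA2 | hA2
  · have hkA : κ * A ≤ A := by nlinarith
    have := KL0 f N (κ * A) (by positivity) h1 (fun n hn => by linarith [h2 n hn])
      (fun n hn => by linarith [h3 n hn])
    refine this.trans ?_
    rw [show 1 / (κ * A) = (1 / κ) * (1 / A) by field_simp]
    exact key _ _ q1.le (by linarith) q3.le (by linarith)
  rcases le_or_gt y A with hyA | hyA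
  · have := norm_sum_card (Finset.range N) f
    rw [Finset.card_range] at this
    have hh : y ≤ √(A * y) := Real.le_sqrt_of_sq_le (by nlinarith)
    refine (this.trans (by linarith : (N : ℝ) ≤ 2 * √(A * y))).trans ?_
    exact key _ _ (by norm_num) (by linarith) q4.le (by linarith)
  · set δ := √(A / y) with hδ
    have hAy : 0 < A / y := by positivity
    have hδ0 : 0 < δ := Real.sqrt_pos.2 hAy
    have hδ2 : δ ^ 2 = A / y := Real.sq_sqrt hAy.le
    have hδ1 : δ ≤ 1 := by
      rw [hδ, Real.sqrt_le_one, div_le_one hy0]; exact hyA.le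
    have hAδ : A / δ = √(A * y) := by
      symm
      rw [Real.sqrt_eq_iff_mul_self_eq (by positivity) (by positivity)]
      have : A = δ ^ 2 * y := by rw [hδ2]; field_simp
      rw [div_mul_div_comm, ← sq δ, hδ2]
      field_simp
    have := vdC f N (κ2 * (A / y)) δ A hl hδ0 hA.le
      (fun n hn => (by positivity : 0 ≤ κ * A).trans (h1 n hn)) h2 h3
    refine this.trans ?_
    have e : δ / (κ2 * (A / y)) = 1 / κ2 * (1 / δ) := by
      rw [← hδ2]; field_simp
    have h1d : 1 ≤ 1 / δ := by rw [le_div_iff₀ hδ0]; linarith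
    refine le_trans (b := (3 * (3 + 2 / κ2)) * √(A * y)) ?_
      (key _ _ (by positivity) (by linarith) q4.le (by linarith))
    rw [e, ← hAδ]
    have : (A + 1) * (1 / δ + 2 * (1 / κ2 * (1 / δ) + 1)) ≤
        (3 * A) * (1 / δ + 2 * (1 / κ2 * (1 / δ) + 1 / δ)) := by
      apply mul_le_mul
      · linarith
      · linarith
      · positivity
      · positivity
    refine this.trans (le_of_eq ?_)
    field_simp
    ring

lemma pos_case (γ : ℝ) (hγ : 0 < γ) (hγ1 : γ < 1) (H y : ℝ) (hH : 0 < H) (hy : 2 ≤ y) :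
    ‖∑ m ∈ Finset.Ioc ⌊y⌋ ⌊2 * y⌋, eC (H * (m : ℝ) ^ γ)‖ ≤
      (1 / (γ * 4 ^ (γ - 1)) + 2 + 3 * (3 + 2 / (γ * (1 - γ) * 4 ^ (γ - 2)))) *
        (√(H * y ^ (γ - 1) * y) + 1 / (H * y ^ (γ - 1))) := by
  have hy0 : 0 < y := by linarith
  set N := (⌊2 * y⌋ - ⌊y⌋).toNat with hN
  set B : ℝ := (⌊y⌋ : ℝ) + 1 with hB
  have hfl : ⌊y⌋ ≤ ⌊2 * y⌋ := Int.floor_le_floor (by linarith)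
  have hN' : (N : ℝ) = (⌊2 * y⌋ : ℝ) - ⌊y⌋ := by
    have : (N : ℤ) = ⌊2 * y⌋ - ⌊y⌋ := Int.toNat_of_nonneg (by linarith)
    exact_mod_cast this
  have hBy : y ≤ B := (Int.lt_floor_add_one y).le
  have hBN : B + N ≤ 2 * y + 1 := by
    rw [hN', hB]; linarith [Int.floor_le (2 * y)]
  have hsum : ∑ m ∈ Finset.Ioc ⌊y⌋ ⌊2 * y⌋, eC (H * (m : ℝ) ^ γ) =
      ∑ n ∈ Finset.range N, eC (H * (B + n) ^ γ) := by
    symm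
    apply Finset.sum_bij (fun (n : ℕ) _ => ⌊y⌋ + 1 + (n : ℤ))
    · intro n hn
      rw [Finset.mem_range] at hn
      rw [Finset.mem_Ioc]; omega
    · intro a _ b _ hab
      omega
    · intro m hm
      rw [Finset.mem_Ioc] at hm
      refine ⟨(m - ⌊y⌋ - 1).toNat, ?_, ?_⟩
      · rw [Finset.mem_range]; omega
      · omega
    · intro n _
      push_cast; rfl
  rw [hsum]
  have le1 : ∀ n < N, B + n + 1 ≤ 4 * y := by
    intro n hn
    have : (n : ℝ) + 1 ≤ N := by exact_mod_cast hn
    linarith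
  apply abs_bd (fun n => H * (B + n) ^ γ) N (H * y ^ (γ - 1)) y (γ * 4 ^ (γ - 1))
    (γ * (1 - γ) * 4 ^ (γ - 2)) (by positivity) hy (by linarith) (by positivity)
  · have : (4 : ℝ) ^ (γ - 1) ≤ 1 := Real.rpow_le_one_of_one_le_of_nonpos (by norm_num) (by linarith)
    have : 0 < (4 : ℝ) ^ (γ - 1) := by positivity
    nlinarith
  · have : 0 < 1 - γ := by linarith
    positivity
  · intro n hn
    have a := (pow_diff γ (B + n) hγ hγ1 (by positivity)).1
    have b : (4 * y) ^ (γ - 1) ≤ (B + n + 1) ^ (γ - 1) :=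
      Real.rpow_le_rpow_of_nonpos (by positivity) (le1 n hn) (by linarith)
    rw [Real.mul_rpow (by norm_num) hy0.le] at b
    push_cast
    rw [← add_assoc, ← mul_sub]
    have := mul_le_mul_of_nonneg_left ((mul_le_mul_of_nonneg_left b hγ.le).trans a) hH.le
    linarith
  · intro n hn
    have a := (pow_diff γ (B + n) hγ hγ1 (by positivity)).2
    have n0 : (0 : ℝ) ≤ n := by positivity
    have b : (B + n) ^ (γ - 1) ≤ y ^ (γ - 1) :=
      Real.rpow_le_rpow_of_nonpos (by positivity) (by linarith) (by linarith)
    push_cast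
    rw [← add_assoc, ← mul_sub]
    apply mul_le_mul_of_nonneg_left _ hH.le
    have : 0 < (B + n) ^ (γ - 1) := by positivity
    nlinarith
  · intro n hn
    have a := pow_diff2 γ (B + n) hγ hγ1 (by positivity)
    have b : (4 * y) ^ (γ - 2) ≤ (B + n + 2) ^ (γ - 2) :=
      Real.rpow_le_rpow_of_nonpos (by positivity) (by
        have := le1 (n + 1) hn
        push_cast at this
        linarith) (by linarith)
    rw [Real.mul_rpow (by norm_num) hy0.le] at b
    have e : H * y ^ (γ - 1) / y = H * y ^ (γ - 2) := by
      rw [mul_div_assoc]; congr 1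
      rw [show γ - 2 = γ - 1 - 1 by ring, Real.rpow_sub_one hy0.ne' (γ - 1)]
    rw [e]
    push_cast
    have c := mul_le_mul_of_nonneg_left b (mul_nonneg hγ.le (by linarith : 0 ≤ 1 - γ))
    have := mul_le_mul_of_nonneg_left ((add_le_add_right c _).trans a) hH.le
    simp only [← add_assoc]
    linarith

/-- exponential sum estimate via the exponent pair `(1/2, 1/2)`:
`∑_{y<m≤2y} e(h m^{1/c}) ≪ |h|^{1/2} y^{1/(2c)} + |h|⁻¹ y^{1−1/c}`. -/
theorem stmt12 (c : ℝ) (hc1 : 1 < c) (hc2 : c < 2) :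
    ∃ C : ℝ, 0 < C ∧ ∀ h : ℤ, h ≠ 0 → ∀ y : ℝ, 2 ≤ y →
      ‖∑ m ∈ Finset.Ioc ⌊y⌋ ⌊2 * y⌋, eC ((h : ℝ) * (m : ℝ) ^ (1 / c))‖ ≤
        C * (|(h : ℝ)| ^ ((1 : ℝ) / 2) * y ^ (1 / (2 * c)) +
          |(h : ℝ)|⁻¹ * y ^ (1 - 1 / c)) := by
  set γ := 1 / c with hγd
  have hγ : 0 < γ := by positivity
  have hγ1 : γ < 1 := by rw [hγd, div_lt_one (by linarith)]; exact hc1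
  have h1γ : 0 < 1 - γ := by linarith
  refine ⟨_, (by positivity : 0 < 1 / (γ * 4 ^ (γ - 1)) + 2 +
    3 * (3 + 2 / (γ * (1 - γ) * 4 ^ (γ - 2)))), ?_⟩
  intro h hh y hy
  have hy0 : 0 < y := by linarith
  have hH : 0 < |(h : ℝ)| := abs_pos.2 (by exact_mod_cast hh)
  have main := pos_case γ hγ hγ1 |(h : ℝ)| y hH hy
  have e1 : √(|(h : ℝ)| * y ^ (γ - 1) * y) = |(h : ℝ)| ^ ((1 : ℝ) / 2) * y ^ (1 / (2 * c)) := by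
    rw [mul_assoc, ← Real.rpow_add_one hy0.ne', Real.sqrt_eq_rpow,
      Real.mul_rpow hH.le (by positivity), ← Real.rpow_mul hy0.le]
    congr 2
    rw [hγd]; field_simp; ring
  have e2 : 1 / (|(h : ℝ)| * y ^ (γ - 1)) = |(h : ℝ)|⁻¹ * y ^ (1 - γ) := by
    rw [show 1 - γ = -(γ - 1) by ring, Real.rpow_neg hy0.le, one_div, mul_inv]
  rw [e1, e2] at main
  refine le_trans (le_of_eq ?_) main
  rcases abs_choice (h : ℝ) with h' | h'
  · rw [h']
  · rw [h']
    simp only [neg_mul, eC_neg]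
    rw [← map_sum, RCLike.norm_conj]
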